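/- arXiv:2307.15564 — 3 statements merged into one kernel-verified Lean document; each statement's English description precedes it below -/
import Mathlib

section
/- Let U ⊆ ℝⁿ be open and let K : U → Mat_n(ℝ) be a smooth matrix-valued map. Let σ₁,…,σₙ : U → ℝ be the (smooth) functions determined by det(t·I − K(x)) = tⁿ − σ₁(x)·t^{n−1} − σ₂(x)·t^{n−2} − … − σₙ(x). For a smooth matrix-valued map A : U → Mat_n(ℝ) define D(A)ᵢ(x) := Σ_{s=1}^n ∂/∂x^s [A(x)]_{s,i}. Then for every i ∈ {1,…,n} and every x ∈ U: Σ_{m=1}^n Σ_{s=1}^n (∂σ_m/∂x^s)(x) · [K(x)^{n−m}]_{s,i} = D(Kⁿ)ᵢ(x) − Σ_{m=1}^{n−1} σ_m(x) · D(K^{n−m})ᵢ(x), where K⁰ = I. -/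
open scoped BigOperators

/-- Partial derivative of `f : ℝⁿ → ℝ` in the `s`-th coordinate direction. -/
noncomputable def pd {n : ℕ} (f : (Fin n → ℝ) → ℝ) (s : Fin n) (x : Fin n → ℝ) : ℝ :=
  fderiv ℝ f x (Pi.single s 1)

/-- The coefficient functions `σₘ` of the characteristic polynomial of a matrix-valued map,
in the convention `det(t·I − K(x)) = tⁿ − σ₁(x) t^{n−1} − … − σₙ(x)`. -/
noncomputable def sigmaCoeff {n : ℕ} (K : (Fin n → ℝ) → Matrix (Fin n) (Fin n) ℝ)
    (m : ℕ) (x : Fin n → ℝ) : ℝ :=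
  -(Matrix.charpoly (K x)).coeff (n - m)

/-- `D(A)ᵢ(x) = Σ_s ∂/∂x^s [A(x)]_{s,i}`. -/
noncomputable def Dop {n : ℕ} (A : (Fin n → ℝ) → Matrix (Fin n) (Fin n) ℝ)
    (i : Fin n) (x : Fin n → ℝ) : ℝ :=
  ∑ s : Fin n, pd (fun y => A y s i) s x

theorem differentiableAt_powEntry {n : ℕ} (K : (Fin n → ℝ) → Matrix (Fin n) (Fin n) ℝ)
    (x : Fin n → ℝ) (hK : ∀ i j, DifferentiableAt ℝ (fun y => K y i j) x) (k : ℕ) :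
    ∀ i j, DifferentiableAt ℝ (fun y => ((K y) ^ k) i j) x := by
  induction k with
  | zero => intro i j; simp
  | succ k ih =>
    intro i j
    simp only [pow_succ, Matrix.mul_apply]
    exact DifferentiableAt.fun_sum fun l _ => (ih i l).mul (hK l j)

theorem differentiableAt_coeff_prod {n : ℕ} {ι : Type*}
    (P : ι → (Fin n → ℝ) → Polynomial ℝ) (x : Fin n → ℝ)
    (hP : ∀ a k, DifferentiableAt ℝ (fun y => (P a y).coeff k) x) (t : Finset ι) :
    ∀ k, DifferentiableAt ℝ (fun y => (∏ a ∈ t, P a y).coeff k) x := by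
  classical
  induction t using Finset.induction_on with
  | empty => intro k; simp
  | insert a t ha ih =>
    intro k
    simp only [Finset.prod_insert ha, Polynomial.coeff_mul]
    exact DifferentiableAt.fun_sum fun p _ => (hP a _).mul (ih _)

theorem differentiableAt_charpoly_coeff {n : ℕ} (K : (Fin n → ℝ) → Matrix (Fin n) (Fin n) ℝ)
    (x : Fin n → ℝ) (hK : ∀ i j, DifferentiableAt ℝ (fun y => K y i j) x) (k : ℕ) :
    DifferentiableAt ℝ (fun y => (Matrix.charpoly (K y)).coeff k) x := by
  simp only [Matrix.charpoly, Matrix.det_apply, Polynomial.finsetSum_coeff, Polynomial.coeff_smul]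
  refine DifferentiableAt.fun_sum fun p _ => ?_
  have h : DifferentiableAt ℝ
      (fun y => (∏ a : Fin n, (K y).charmatrix (p a) a).coeff k) x := by
    refine differentiableAt_coeff_prod (fun a y => (K y).charmatrix (p a) a) x ?_ _ k
    intro a k
    simp only [Matrix.charmatrix_apply, Polynomial.coeff_sub, Polynomial.coeff_C]
    refine (differentiableAt_const _).sub ?_
    split_ifs
    · exact hK _ _
    · exact differentiableAt_const _
  rcases Int.units_eq_one_or (Equiv.Perm.sign p) with hp | hp
  · simpa [hp] using h
  · simpa [hp] using h.fun_neg

theorem pow_eq_sum_sigmaCoeff {n : ℕ} (K : (Fin n → ℝ) → Matrix (Fin n) (Fin n) ℝ)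
    (y : Fin n → ℝ) :
    (K y) ^ n = ∑ m ∈ Finset.Icc 1 n, sigmaCoeff K m y • (K y) ^ (n - m) := by
  have h := Matrix.aeval_self_charpoly (K y)
  have hd : (K y).charpoly.natDegree = n := by simp [Matrix.charpoly_natDegree_eq_dim]
  have hc : (K y).charpoly.coeff n = 1 := by
    have := (Matrix.charpoly_monic (K y)).coeff_natDegree
    rwa [hd] at this
  rw [Polynomial.aeval_eq_sum_range, hd, Finset.sum_range_succ, hc, one_smul] at h
  have h2 : ∑ m ∈ Finset.Icc 1 n, sigmaCoeff K m y • (K y) ^ (n - m)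
      = - ∑ k ∈ Finset.range n, (K y).charpoly.coeff k • (K y) ^ k := by
    rw [← Finset.sum_neg_distrib]
    refine Finset.sum_bij' (fun m _ => n - m) (fun k _ => n - k) ?_ ?_ ?_ ?_ ?_
    · intro a ha; simp at ha ⊢; omega
    · intro a ha; simp at ha ⊢; omega
    · intro a ha; simp at ha ⊢; omega
    · intro a ha; simp at ha ⊢; omega
    · intro a ha; simp [sigmaCoeff]
  rw [h2]
  exact eq_neg_of_add_eq_zero_right h

theorem sigma_derivative_identity {n : ℕ} (U : Set (Fin n → ℝ)) (hU : IsOpen U)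
    (K : (Fin n → ℝ) → Matrix (Fin n) (Fin n) ℝ)
    (hK : ∀ i j : Fin n, ContDiffOn ℝ (⊤ : ℕ∞) (fun x => K x i j) U) :
    ∀ i : Fin n, ∀ x ∈ U,
      (∑ m ∈ Finset.Icc 1 n, ∑ s : Fin n,
          pd (sigmaCoeff K m) s x * ((K x) ^ (n - m)) s i)
        = Dop (fun y => (K y) ^ n) i x
            - ∑ m ∈ Finset.Icc 1 (n - 1), sigmaCoeff K m x * Dop (fun y => (K y) ^ (n - m)) i x := by
  intro i x hx
  have hd : ∀ a b, DifferentiableAt ℝ (fun y => K y a b) x := fun a b =>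
    ((hK a b).contDiffAt (hU.mem_nhds hx)).differentiableAt (by simp)
  have hp := differentiableAt_powEntry K x hd
  have hs : ∀ m, DifferentiableAt ℝ (sigmaCoeff K m) x := fun m =>
    (differentiableAt_charpoly_coeff K x hd (n - m)).fun_neg
  have key : ∀ s : Fin n, pd (fun y => ((K y) ^ n) s i) s x
      = ∑ m ∈ Finset.Icc 1 n, (pd (sigmaCoeff K m) s x * ((K x) ^ (n - m)) s i
          + sigmaCoeff K m x * pd (fun y => ((K y) ^ (n - m)) s i) s x) := by
    intro s
    have e : (fun y => ((K y) ^ n) s i)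
        = fun y => ∑ m ∈ Finset.Icc 1 n, sigmaCoeff K m y * ((K y) ^ (n - m)) s i := by
      funext y
      rw [pow_eq_sum_sigmaCoeff K y]
      simp [Matrix.sum_apply]
    rw [e]
    unfold pd
    rw [fderiv_fun_sum (fun m _ => (hs m).fun_mul (hp (n - m) s i))]
    rw [sum_apply]
    refine Finset.sum_congr rfl fun m _ => ?_
    rw [fderiv_fun_mul (hs m) (hp (n - m) s i)]
    simp
    ring
  have hn : 1 ≤ n := by have := i.2; omega
  have hlast : ∑ m ∈ Finset.Icc 1 n, sigmaCoeff K m x * Dop (fun y => (K y) ^ (n - m)) i x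
      = ∑ m ∈ Finset.Icc 1 (n - 1), sigmaCoeff K m x * Dop (fun y => (K y) ^ (n - m)) i x := by
    symm
    apply Finset.sum_subset
    · intro a ha; simp at ha ⊢; omega
    · intro a ha hb
      have : a = n := by simp at ha hb; omega
      subst this
      simp [Dop, pd]
  rw [← hlast, eq_sub_iff_add_eq]
  conv_rhs => unfold Dop
  rw [Finset.sum_congr rfl fun s _ => key s, ← Finset.sum_add_distrib]
  conv_rhs => rw [Finset.sum_comm]
  refine Finset.sum_congr rfl fun m _ => ?_
  rw [Finset.sum_add_distrib, Dop, Finset.mul_sum]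
end

section
/- Let m₁,…,m_k ≥ 1 with n = m₁+…+m_k, set M₀ = 0 and M_s = m₁+…+m_s. Let U ⊆ ℝⁿ be open and let λ₁,…,λ_k : U → ℝ be smooth with λ_r(x) ≠ λ_s(x) for all r ≠ s and all x ∈ U. Let K(x) be the n×n block-diagonal matrix with blocks J_{m₁}(λ₁(x)),…,J_{m_k}(λ_k(x)). Let σ₁,…,σₙ : U → ℝ be determined by det(t·I − K(x)) = tⁿ − σ₁(x)·t^{n−1} − … − σₙ(x), and define the row vector V(x) ∈ ℝⁿ by Vᵢ(x) = Σ_{m=1}^n Σ_{s=1}^n (∂σ_m/∂x^s)(x) · [K(x)^{n−m}]_{s,i} (with K⁰ = I). Then for every s ∈ {1,…,k}: Vⱼ(x) = 0 for every index j with M_{s−1} < j < M_s, and V_{M_s}(x) = m_s · (∂λ_s/∂x^{M_{s−1}+1})(x) · Π_{r≠s} (λ_s(x) − λ_r(x))^{m_r}. -/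
open scoped BigOperators

/-- Partial sums of block sizes: `Msum m s = m 0 + … + m (s-1)`, so `Msum m 0 = 0`. -/
def Msum (m : ℕ → ℕ) (s : ℕ) : ℕ :=
  ∑ r ∈ Finset.range s, m r

/-- The (0-indexed) block to which the (0-indexed) position `i` belongs, for block sizes
`m 0, …, m (k-1)`. -/
def blk (k : ℕ) (m : ℕ → ℕ) (i : ℕ) : ℕ :=
  ((Finset.range k).filter (fun s => Msum m (s + 1) ≤ i)).card

/-- The `n × n` block-diagonal matrix with Jordan blocks `J_{m 0}(lam 0), …, J_{m (k-1)}(lam (k-1))`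
(evaluated at the point `x`). -/
noncomputable def KblockDiag {n : ℕ} (k : ℕ) (m : ℕ → ℕ) (lam : ℕ → (Fin n → ℝ) → ℝ)
    (x : Fin n → ℝ) : Matrix (Fin n) (Fin n) ℝ :=
  fun i j =>
    if (j : ℕ) = (i : ℕ) then lam (blk k m i) x
    else if (j : ℕ) = (i : ℕ) + 1 ∧ blk k m j = blk k m i then 1 else 0

/-- The row vector `Vᵢ(x) = Σ_{m=1}^n Σ_{s=1}^n (∂σₘ/∂x^s)(x) · [K(x)^{n−m}]_{s,i}`. -/
noncomputable def Vvec {n : ℕ} (K : (Fin n → ℝ) → Matrix (Fin n) (Fin n) ℝ)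
    (i : Fin n) (x : Fin n → ℝ) : ℝ :=
  ∑ m ∈ Finset.Icc 1 n, ∑ s : Fin n, pd (sigmaCoeff K m) s x * ((K x) ^ (n - m)) s i


open Polynomial in
/-- `P` has a coefficientwise directional derivative `P'` at `x` in direction `v`. -/
def DPol {n : ℕ} (x v : Fin n → ℝ) (P : (Fin n → ℝ) → ℝ[X]) (P' : ℝ[X]) : Prop :=
  ∀ j, DifferentiableAt ℝ (fun y => (P y).coeff j) x ∧
    fderiv ℝ (fun y => (P y).coeff j) x v = P'.coeff j

open Polynomial in
lemma DPol.mul {n : ℕ} {x v : Fin n → ℝ} {P Q : (Fin n → ℝ) → ℝ[X]} {P' Q' : ℝ[X]}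
    (hP : DPol x v P P') (hQ : DPol x v Q Q') :
    DPol x v (fun y => P y * Q y) (P' * Q x + P x * Q') := by
  intro j
  simp only [coeff_mul, coeff_add]
  have h : HasFDerivAt (fun y => ∑ a ∈ Finset.HasAntidiagonal.antidiagonal j, (P y).coeff a.1 * (Q y).coeff a.2)
      (∑ a ∈ Finset.HasAntidiagonal.antidiagonal j, ((P x).coeff a.1 • fderiv ℝ (fun y => (Q y).coeff a.2) x +
        (Q x).coeff a.2 • fderiv ℝ (fun y => (P y).coeff a.1) x)) x :=
    HasFDerivAt.fun_sum fun a _ => (hP a.1).1.hasFDerivAt.mul (hQ a.2).1.hasFDerivAt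
  refine ⟨h.differentiableAt, ?_⟩
  rw [h.fderiv, ← Finset.sum_add_distrib, sum_apply]
  refine Finset.sum_congr rfl fun a _ => ?_
  simp only [add_apply, FunLike.coe_smul, Pi.smul_apply, smul_eq_mul, (hP a.1).2, (hQ a.2).2]
  ring

open Polynomial in
lemma DPol.one {n : ℕ} {x v : Fin n → ℝ} : DPol x v (fun _ => (1 : ℝ[X])) 0 := by
  intro j
  simp

open Polynomial in
lemma DPol.pow {n : ℕ} {x v : Fin n → ℝ} {P : (Fin n → ℝ) → ℝ[X]} {P' : ℝ[X]}
    (hP : DPol x v P P') (e : ℕ) :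
    DPol x v (fun y => P y ^ e) (C (e : ℝ) * P x ^ (e - 1) * P') := by
  induction e with
  | zero => simpa using DPol.one
  | succ e ih =>
    have h := ih.mul hP
    simp only [← pow_succ] at h
    convert h using 1
    rcases e with _ | e
    · simp
    · simp only [Nat.add_sub_cancel, pow_succ, Nat.cast_add, Nat.cast_one, C_add, C_1]
      ring

open Polynomial in
lemma DPol.prod {n : ℕ} {x v : Fin n → ℝ} {P : ℕ → (Fin n → ℝ) → ℝ[X]} {P' : ℕ → ℝ[X]}
    (T : Finset ℕ) (hP : ∀ r ∈ T, DPol x v (P r) (P' r)) :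
    DPol x v (fun y => ∏ r ∈ T, P r y) (∑ r ∈ T, P' r * ∏ q ∈ T.erase r, P q x) := by
  induction T using Finset.induction_on with
  | empty => simpa using DPol.one
  | insert a T ha ih =>
    have h := (hP a (Finset.mem_insert_self _ _)).mul
      (ih fun r hr => hP r (Finset.mem_insert_of_mem hr))
    simp only [Finset.prod_insert ha]
    convert h using 1
    rw [Finset.sum_insert ha, Finset.erase_insert ha, Finset.mul_sum]
    congr 1
    refine Finset.sum_congr rfl fun r hr => ?_
    have hne : a ≠ r := fun h => ha (h ▸ hr)
    rw [Finset.erase_insert_of_ne hne,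
      Finset.prod_insert (fun h => ha (Finset.mem_of_mem_erase h))]
    ring

open Polynomial in
lemma DPol.lin {n : ℕ} {x v : Fin n → ℝ} {f : (Fin n → ℝ) → ℝ} (hf : DifferentiableAt ℝ f x) :
    DPol x v (fun y => X - C (f y)) (-C (fderiv ℝ f x v)) := by
  intro j
  rcases j with _ | j
  · simp only [coeff_sub, coeff_X_zero, coeff_C_zero, coeff_neg, zero_sub]
    exact ⟨hf.fun_neg, by rw [fderiv_fun_neg]; simp⟩
  · simp

lemma Msum_succ' (m : ℕ → ℕ) (s : ℕ) : Msum m (s + 1) = Msum m s + m s := by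
  simp [Msum, Finset.sum_range_succ]

lemma Msum_mono (m : ℕ → ℕ) : Monotone (Msum m) :=
  monotone_nat_of_le_succ fun s => by rw [Msum_succ']; omega

lemma blk_eq (k : ℕ) (m : ℕ → ℕ) (i s : ℕ) (hs : s < k) (h1 : Msum m s ≤ i)
    (h2 : i < Msum m (s + 1)) : blk k m i = s := by
  have : (Finset.range k).filter (fun s => Msum m (s + 1) ≤ i) = Finset.range s := by
    ext t
    simp only [Finset.mem_filter, Finset.mem_range]
    constructor
    · rintro ⟨_, ht⟩
      by_contra hc
      have := Msum_mono m (show s + 1 ≤ t + 1 by omega)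
      omega
    · intro ht
      have := Msum_mono m (show t + 1 ≤ s by omega)
      omega
  rw [blk, this, Finset.card_range]

lemma blk_exists (k : ℕ) (m : ℕ → ℕ) (i : ℕ) (hi : i < Msum m k) :
    ∃ s < k, Msum m s ≤ i ∧ i < Msum m (s + 1) := by
  induction k with
  | zero => simp [Msum] at hi
  | succ k ih =>
    by_cases h : i < Msum m k
    · obtain ⟨s, hs, h'⟩ := ih h
      exact ⟨s, by omega, h'⟩
    · exact ⟨k, by omega, by omega, hi⟩

lemma blk_spec (k : ℕ) (m : ℕ → ℕ) (i : ℕ) (hi : i < Msum m k) :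
    blk k m i < k ∧ Msum m (blk k m i) ≤ i ∧ i < Msum m (blk k m i + 1) := by
  obtain ⟨s, hs, h1, h2⟩ := blk_exists k m i hi
  rw [blk_eq k m i s hs h1 h2]
  exact ⟨hs, h1, h2⟩

lemma blk_mono (k : ℕ) (m : ℕ → ℕ) : Monotone (blk k m) := by
  intro i j hij
  refine Finset.card_le_card fun s hs => ?_
  simp only [Finset.mem_filter] at hs ⊢
  exact ⟨hs.1, hs.2.trans hij⟩

lemma prod_blk {R : Type*} [CommMonoid R] (k : ℕ) (m : ℕ → ℕ) (f : ℕ → R) (t : ℕ) (ht : t ≤ k) :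
    ∏ i ∈ Finset.range (Msum m t), f (blk k m i) = ∏ r ∈ Finset.range t, f r ^ m r := by
  induction t with
  | zero => simp [Msum]
  | succ t ih =>
    rw [Msum_succ', Finset.prod_range_add, ih (by omega), Finset.prod_range_succ]
    congr 1
    rw [Finset.prod_congr rfl (g := fun _ => f t), Finset.prod_const, Finset.card_range]
    intro i hi
    rw [Finset.mem_range] at hi
    rw [blk_eq k m (Msum m t + i) t (by omega) (by omega) (by rw [Msum_succ']; omega)]

open Polynomial in
lemma charpoly_K {n : ℕ} (k : ℕ) (m : ℕ → ℕ) (hn : n = Msum m k)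
    (lam : ℕ → (Fin n → ℝ) → ℝ) (y : Fin n → ℝ) :
    (KblockDiag k m lam y).charpoly = ∏ r ∈ Finset.range k, (X - C (lam r y)) ^ m r := by
  rw [Matrix.charpoly_of_isUpperTriangular]
  · rw [← prod_blk k m (fun r => X - C (lam r y)) k le_rfl, ← hn, Finset.prod_range]
    simp [KblockDiag]
  · intro i j hij
    have : (j : ℕ) < i := hij
    simp only [KblockDiag]
    rw [if_neg (by omega), if_neg (by omega)]

open Polynomial in
lemma aeval_K {n : ℕ} (k : ℕ) (m : ℕ → ℕ) (lam : ℕ → (Fin n → ℝ) → ℝ) (x : Fin n → ℝ)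
    (f : ℝ[X]) : ∀ a c : Fin n, (aeval (KblockDiag k m lam x) f) a c =
      if blk k m a = blk k m c ∧ (a : ℕ) ≤ c then
        (taylor (lam (blk k m c) x) f).coeff ((c : ℕ) - a) else 0 := by
  induction f using Polynomial.induction_on with
  | C r =>
    intro a c
    rw [aeval_C, Matrix.algebraMap_matrix_apply, taylor_C, coeff_C]
    by_cases hac : a = c
    · simp [hac]
    · have : (a : ℕ) ≠ c := fun h => hac (Fin.ext h)
      rw [if_neg hac]
      split_ifs <;> first | rfl | omega
  | add p q hp hq =>
    intro a c
    rw [map_add, Matrix.add_apply, hp, hq, map_add, coeff_add]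
    split_ifs <;> simp
  | monomial e r ih =>
    intro a c
    have hx : (C r * X ^ (e + 1) : ℝ[X]) = C r * X ^ e * X := by ring
    rw [hx]
    generalize (C r * X ^ e : ℝ[X]) = f at ih
    rw [map_mul, aeval_X, Matrix.mul_apply, taylor_mul, taylor_X, mul_add, coeff_add, coeff_mul_C]
    simp only [ih]
    by_cases hc : (c : ℕ) = 0
    · rw [Finset.sum_eq_single c]
      · simp only [KblockDiag, if_true, hc]
        by_cases h : blk k m a = blk k m 0 ∧ (a : ℕ) ≤ 0
        · have : (a : ℕ) = 0 := by omega
          simp [this]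
        · simp [h]
      · intro b _ hb
        have : (c : ℕ) ≠ b := fun h => hb (Fin.ext h.symm)
        simp only [KblockDiag]
        rw [if_neg this, if_neg (show ¬ ((c : ℕ) = b + 1 ∧ blk k m c = blk k m b) by omega), mul_zero]
      · simp
    · obtain ⟨d, hd⟩ := Nat.exists_eq_succ_of_ne_zero hc
      let c' : Fin n := ⟨d, by omega⟩
      have hcc : c ≠ c' := by
        intro h
        have : (c : ℕ) = d := congrArg Fin.val h
        omega
      rw [← Finset.sum_subset (Finset.subset_univ {c, c'}), Finset.sum_pair hcc]
      · have hcv : (c' : ℕ) = d := rfl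
        simp only [KblockDiag, if_true, hcv, hd]
        simp only [Nat.succ_eq_add_one]
        rw [if_neg (show ¬ (d + 1 = d) by omega)]
        have m1 := blk_mono k m (show d ≤ d + 1 by omega)
        by_cases h : blk k m a = blk k m (d + 1) ∧ (a : ℕ) ≤ d + 1
        · rw [if_pos h, if_pos h]
          by_cases hlt : (a : ℕ) ≤ d
          · have m2 := blk_mono k m hlt
            have hb : blk k m (d + 1) = blk k m d := by omega
            rw [if_pos ⟨by omega, hlt⟩, if_pos ⟨trivial, hb⟩, hb,
              show d + 1 - (a : ℕ) = (d - a) + 1 by omega, coeff_mul_X]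
            ring
          · have : (a : ℕ) = d + 1 := by omega
            rw [this]
            simp
        · rw [if_neg h, if_neg h]
          by_cases hb : blk k m (d + 1) = blk k m d
          · rw [if_neg (show ¬ (blk k m a = blk k m d ∧ (a : ℕ) ≤ d) by
              rw [hb] at h
              omega)]
            simp
          · simp [hb]
      · intro b _ hb
        simp only [Finset.mem_insert, Finset.mem_singleton, not_or] at hb
        have h1 : (c : ℕ) ≠ b := fun h => hb.1 (Fin.ext h.symm)
        have h2 : (b : ℕ) ≠ d := fun h => hb.2 (Fin.ext h)
        simp only [KblockDiag]
        rw [if_neg h1, if_neg (show ¬ ((c : ℕ) = b + 1 ∧ blk k m c = blk k m b) by omega), mul_zero]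

open Polynomial in
/-- The entries of `(K - λ_r)^{m_r - 1} ∏_{q ≠ r} (K - λ_q)^{m_q}`. -/
lemma entry_P {n : ℕ} (k : ℕ) (m : ℕ → ℕ) (hn : n = Msum m k)
    (lam : ℕ → (Fin n → ℝ) → ℝ) (x : Fin n → ℝ) (r s : ℕ) (hr : r < k) (hs : s < k)
    (a c : Fin n) (h1 : Msum m s ≤ c) (h2 : (c : ℕ) < Msum m (s + 1)) :
    (aeval (KblockDiag k m lam x) ((X - C (lam r x)) ^ (m r - 1) *
      ∏ q ∈ (Finset.range k).erase r, (X - C (lam q x)) ^ m q)) a c =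
      if r = s ∧ (a : ℕ) = Msum m s ∧ (c : ℕ) + 1 = Msum m (s + 1) then
        ∏ q ∈ (Finset.range k).erase s, (lam s x - lam q x) ^ m q else 0 := by
  have hMs := Msum_succ' m s
  rw [aeval_K, blk_eq k m c s hs h1 h2]
  obtain ⟨ha0, ha1, ha2⟩ := blk_spec k m a (by omega)
  by_cases hb : blk k m a = s ∧ (a : ℕ) ≤ c
  swap
  · rw [if_neg hb, if_neg]
    rintro ⟨_, h3, h4⟩
    exact hb ⟨blk_eq k m a s hs (by omega) (by omega), by omega⟩
  rw [if_pos hb]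
  rw [hb.1] at ha1 ha2
  by_cases hrs : r = s
  · subst hrs
    rw [taylor_mul, taylor_pow, map_sub, taylor_X, taylor_C, add_sub_cancel_right, coeff_X_pow_mul']
    by_cases hh : (a : ℕ) = Msum m r ∧ (c : ℕ) + 1 = Msum m (r + 1)
    · rw [if_pos (by omega), if_pos ⟨rfl, hh⟩, show (c : ℕ) - a - (m r - 1) = 0 by omega,
        taylor_coeff_zero, eval_prod]
      simp
    · rw [if_neg (by omega), if_neg (by tauto)]
  · rw [if_neg (by tauto)]
    have hmem : s ∈ (Finset.range k).erase r := by
      simp [hs, Ne.symm hrs]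
    rw [← Finset.mul_prod_erase _ _ hmem, mul_left_comm, taylor_mul, taylor_pow, map_sub, taylor_X,
      taylor_C, add_sub_cancel_right, coeff_X_pow_mul', if_neg (by omega)]

open Polynomial in
lemma Vvec_formula {n : ℕ} (k : ℕ) (m : ℕ → ℕ) (hn : n = Msum m k)
    (lam : ℕ → (Fin n → ℝ) → ℝ) (x : Fin n → ℝ)
    (hd : ∀ r < k, DifferentiableAt ℝ (lam r) x) (c : Fin n) :
    Vvec (KblockDiag k m lam) c x = ∑ a : Fin n, ∑ r ∈ Finset.range k,
      (m r : ℝ) * pd (lam r) a x *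
      (aeval (KblockDiag k m lam x) ((X - C (lam r x)) ^ (m r - 1) *
        ∏ q ∈ (Finset.range k).erase r, (X - C (lam q x)) ^ m q)) a c := by
  rw [Vvec, Finset.sum_comm]
  refine Finset.sum_congr rfl fun a _ => ?_
  let Q : ℝ[X] := ∑ r ∈ Finset.range k, C ((m r : ℝ) * pd (lam r) a x) *
    ((X - C (lam r x)) ^ (m r - 1) *
        ∏ q ∈ (Finset.range k).erase r, (X - C (lam q x)) ^ m q)
  have hD : DPol x (Pi.single a 1) (fun y => (KblockDiag k m lam y).charpoly) (-Q) := by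
    simp only [charpoly_K k m hn]
    have := DPol.prod (x := x) (v := Pi.single a 1)
      (P := fun r y => (X - C (lam r y)) ^ m r) (Finset.range k)
      (fun r hr => (DPol.lin (v := Pi.single a 1) (hd r (Finset.mem_range.1 hr))).pow (m r))
    convert this using 1
    rw [← Finset.sum_neg_distrib]
    refine Finset.sum_congr rfl fun r _ => ?_
    rw [pd, C_mul]
    ring
  have hpd : ∀ i, pd (sigmaCoeff (KblockDiag k m lam) i) a x = Q.coeff (n - i) := by
    intro i
    have h := (hD (n - i)).2
    have h0 : sigmaCoeff (KblockDiag k m lam) i =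
        fun y => -((KblockDiag k m lam y).charpoly.coeff (n - i)) := rfl
    rw [pd, h0, fderiv_fun_neg, neg_apply, h, coeff_neg, neg_neg]
  have hdeg : Q.natDegree < n := by
    have hpos : 0 < n := by have := c.2; omega
    rw [Nat.lt_iff_le_pred hpos, natDegree_le_iff_coeff_eq_zero]
    intro j hj'
    have hj : n ≤ j := by omega
    have h := (hD j).2
    have hc : (fun y => ((KblockDiag k m lam y).charpoly).coeff j) =
        fun _ => if j = n then (1 : ℝ) else 0 := by
      funext y
      have hdg : (KblockDiag k m lam y).charpoly.natDegree = n := by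
        rw [Matrix.charpoly_natDegree_eq_dim, Fintype.card_fin]
      split_ifs with hjn
      · have := (KblockDiag k m lam y).charpoly_monic.coeff_natDegree
        rw [hdg] at this
        rw [hjn, this]
      · exact coeff_eq_zero_of_natDegree_lt (by omega)
    rw [hc] at h
    simpa using h.symm
  have hQ : (aeval (KblockDiag k m lam x) Q) a c = ∑ r ∈ Finset.range k,
      (m r : ℝ) * pd (lam r) a x *
      (aeval (KblockDiag k m lam x) ((X - C (lam r x)) ^ (m r - 1) *
        ∏ q ∈ (Finset.range k).erase r, (X - C (lam q x)) ^ m q)) a c := by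
    simp only [Q, map_sum, Matrix.sum_apply]
    refine Finset.sum_congr rfl fun r _ => ?_
    rw [C_mul', map_smul, Matrix.smul_apply, smul_eq_mul]
  rw [← hQ, aeval_eq_sum_range' hdeg, Matrix.sum_apply, ← Finset.sum_range_reflect,
    show Finset.Icc 1 n = (Finset.range n).image (fun i => i + 1) by
      ext i
      simp only [Finset.mem_Icc, Finset.mem_image, Finset.mem_range]
      exact ⟨fun h => ⟨i - 1, by omega, by omega⟩, by rintro ⟨b, hb, rfl⟩; omega⟩,
    Finset.sum_image (by intro a _ b _ h; simpa using h)]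
  refine Finset.sum_congr rfl fun i hi => ?_
  rw [hpd, Matrix.smul_apply, smul_eq_mul, show n - 1 - i = n - (i + 1) by omega]

theorem Vvec_components_blockDiag (k : ℕ) (m : ℕ → ℕ) (hm : ∀ s < k, 1 ≤ m s)
    {n : ℕ} (hn : n = Msum m k)
    (U : Set (Fin n → ℝ)) (hU : IsOpen U)
    (lam : ℕ → (Fin n → ℝ) → ℝ)
    (hlam : ∀ s < k, ContDiffOn ℝ (⊤ : ℕ∞) (lam s) U)
    (hdist : ∀ r < k, ∀ s < k, r ≠ s → ∀ x ∈ U, lam r x ≠ lam s x) :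
    ∀ x ∈ U, ∀ s < k,
      (∀ j : Fin n, Msum m s ≤ (j : ℕ) → (j : ℕ) + 1 < Msum m (s + 1) →
        Vvec (KblockDiag k m lam) j x = 0) ∧
      (∀ j j0 : Fin n, (j : ℕ) + 1 = Msum m (s + 1) → (j0 : ℕ) = Msum m s →
        Vvec (KblockDiag k m lam) j x =
          (m s : ℝ) * pd (lam s) j0 x *
            ∏ r ∈ (Finset.range k).erase s, (lam s x - lam r x) ^ (m r)) := by
  intro x hx s hs
  have hd : ∀ r < k, DifferentiableAt ℝ (lam r) x := fun r hr =>
    ((hlam r hr).contDiffAt (hU.mem_nhds hx)).differentiableAt (by simp)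
  have hMs := Msum_succ' m s
  have hms := hm s hs
  constructor
  · intro j h1 h2
    rw [Vvec_formula k m hn lam x hd]
    refine Finset.sum_eq_zero fun a _ => Finset.sum_eq_zero fun r hr => ?_
    rw [entry_P k m hn lam x r s (Finset.mem_range.1 hr) hs a j h1 (by omega),
      if_neg (by omega), mul_zero]
  · intro j j0 h1 h2
    rw [Vvec_formula k m hn lam x hd, Finset.sum_eq_single j0, Finset.sum_eq_single s]
    · rw [entry_P k m hn lam x s s hs hs j0 j (by omega) (by omega), if_pos ⟨rfl, h2, h1⟩]
    · intro r hr hrs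
      rw [entry_P k m hn lam x r s (Finset.mem_range.1 hr) hs j0 j (by omega) (by omega),
        if_neg (by tauto), mul_zero]
    · simp [hs]
    · intro a _ ha
      have : (a : ℕ) ≠ j0 := fun h => ha (Fin.ext h)
      refine Finset.sum_eq_zero fun r hr => ?_
      rw [entry_P k m hn lam x r s (Finset.mem_range.1 hr) hs a j (by omega) (by omega),
        if_neg (by omega), mul_zero]
    · simp
end

section
/- Let U ⊆ ℝⁿ be open and let K₁,…,Kₙ : U → ℝ be smooth with Kᵢ(x) ≠ Kⱼ(x) for all i ≠ j and all x ∈ U. Let K(x) = diag(K₁(x),…,Kₙ(x)) and let σ₁,…,σₙ : U → ℝ be determined by det(t·I − K(x)) = tⁿ − σ₁(x)·t^{n−1} − … − σₙ(x). Then the identity Σ_{m=1}^n Σ_{s=1}^n (∂σ_m/∂x^s)(x) · [K(x)^{n−m}]_{s,i} = 0 (with K⁰ = I) holds for all i ∈ {1,…,n} and all x ∈ U if and only if the weak nonlinearity condition (∂Kᵢ/∂xⁱ)(x) = 0 holds for all i ∈ {1,…,n} and all x ∈ U. -/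
open scoped BigOperators

open Polynomial in
lemma coeff_differentiableAt {n : ℕ} (K : Fin n → (Fin n → ℝ) → ℝ) (x : Fin n → ℝ)
    (h : ∀ j, DifferentiableAt ℝ (K j) x) (S : Finset (Fin n)) :
    ∀ k : ℕ, DifferentiableAt ℝ (fun y => (∏ j ∈ S, (X - C (K j y))).coeff k) x := by
  classical
  induction S using Finset.induction_on with
  | empty => intro k; simp
  | insert a S ha ih =>
    intro k
    simp only [Finset.prod_insert ha, sub_mul, coeff_sub, coeff_C_mul]
    have h2 := (h a).mul (ih k)
    cases k with
    | zero => simp only [mul_coeff_zero, coeff_X_zero, zero_mul]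
              exact (differentiableAt_const (0 : ℝ)).sub h2
    | succ k => simp only [coeff_X_mul]; exact (ih k).sub h2

lemma charpoly_diag {n : ℕ} (d : Fin n → ℝ) :
    (Matrix.diagonal d).charpoly = ∏ j, (Polynomial.X - Polynomial.C (d j)) := by
  rw [Matrix.charpoly_diagonal]

lemma key_identity {n : ℕ} (K : Fin n → (Fin n → ℝ) → ℝ) (x : Fin n → ℝ)
    (h : ∀ j, DifferentiableAt ℝ (K j) x) (i : Fin n) :
    (∑ m ∈ Finset.Icc 1 n, ∑ s : Fin n,
          pd (sigmaCoeff (fun y => Matrix.diagonal (fun r => K r y)) m) s x *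
            ((Matrix.diagonal (fun r => K r x)) ^ (n - m)) s i)
      = pd (K i) i x * ∏ j ∈ Finset.univ.erase i, (K i x - K j x) := by
  classical
  set t := K i x with ht
  let c : ℕ → (Fin n → ℝ) → ℝ := fun k y =>
    (∏ j, (Polynomial.X - Polynomial.C (K j y))).coeff k
  have hc : ∀ k, DifferentiableAt ℝ (c k) x := coeff_differentiableAt K x h Finset.univ
  have hs : ∀ m, sigmaCoeff (fun y => Matrix.diagonal (fun r => K r y)) m
      = fun y => - c (n - m) y := by
    intro m; funext y; simp only [sigmaCoeff, charpoly_diag, c]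
  have h1 : ∀ m, (∑ s : Fin n,
          pd (sigmaCoeff (fun y => Matrix.diagonal (fun r => K r y)) m) s x *
            ((Matrix.diagonal (fun r => K r x)) ^ (n - m)) s i)
      = - (pd (c (n - m)) i x * t ^ (n - m)) := by
    intro m
    rw [Finset.sum_eq_single i]
    · rw [hs, Matrix.diagonal_pow]
      simp [pd, fderiv_fun_neg, ht]
    · intro s _ hsi
      rw [Matrix.diagonal_pow, Matrix.diagonal_apply_ne _ hsi, mul_zero]
    · simp
  simp only [h1]
  have h2 : ∑ m ∈ Finset.Icc 1 n, -(pd (c (n - m)) i x * t ^ (n - m))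
      = ∑ k ∈ Finset.range n, -(pd (c k) i x * t ^ k) := by
    refine Finset.sum_nbij' (fun m => n - m) (fun k => n - k) ?_ ?_ ?_ ?_ ?_
    · intro m hm; simp at hm ⊢; omega
    · intro m hm; simp at hm ⊢; omega
    · intro m hm; simp at hm ⊢; omega
    · intro m hm; simp at hm ⊢; omega
    · intro m hm; rfl
  rw [h2]
  have h3 : ∀ y, ∑ k ∈ Finset.range n, c k y * t ^ k
      = (t - K i y) * ∏ j ∈ Finset.univ.erase i, (t - K j y) - t ^ n := by
    intro y
    rw [Finset.mul_prod_erase Finset.univ (fun j => t - K j y) (Finset.mem_univ i)]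
    have hd : (∏ j, (Polynomial.X - Polynomial.C (K j y))).natDegree = n := by
      rw [Polynomial.natDegree_finsetProd_X_sub_C_eq_card]; simp
    have hm : (∏ j, (Polynomial.X - Polynomial.C (K j y))).coeff n = 1 := by
      have := Polynomial.monic_prod_X_sub_C (fun j => K j y) Finset.univ
      rw [Polynomial.Monic, Polynomial.leadingCoeff, hd] at this
      exact this
    have he := Polynomial.eval_eq_sum_range (p := ∏ j, (Polynomial.X - Polynomial.C (K j y))) t
    rw [hd, Finset.sum_range_succ, hm, Polynomial.eval_prod] at he
    simp only [Polynomial.eval_sub, Polynomial.eval_X, Polynomial.eval_C] at he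
    rw [he]; simp [c]
  have hP : DifferentiableAt ℝ (fun y => ∏ j ∈ Finset.univ.erase i, (t - K j y)) x := by
    have hj : ∀ j, DifferentiableAt ℝ (fun y => t - K j y) x := fun j =>
      (differentiableAt_const t).sub (h j)
    exact (HasFDerivAt.finsetProd (u := Finset.univ.erase i)
      fun j _ => (hj j).hasFDerivAt).differentiableAt
  have hL : HasFDerivAt (fun y => ∑ k ∈ Finset.range n, c k y * t ^ k)
      (∑ k ∈ Finset.range n, t ^ k • fderiv ℝ (c k) x) x :=
    HasFDerivAt.fun_sum fun k _ => (hc k).hasFDerivAt.mul_const _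
  have hR := (((h i).hasFDerivAt.const_sub t).mul hP.hasFDerivAt).sub_const (t ^ n)
  have hE := hL.unique (hR.congr_of_eventuallyEq (Filter.Eventually.of_forall h3))
  have hE' := congrArg (fun l => l (Pi.single i 1)) hE
  simp only [Finset.sum_neg_distrib, pd]
  simp [← ht] at hE'
  rw [Finset.sum_congr rfl fun k _ => mul_comm _ _, hE']
  ring

theorem weakNonlinearity_criterion_diagonal {n : ℕ} (U : Set (Fin n → ℝ)) (hU : IsOpen U)
    (K : Fin n → (Fin n → ℝ) → ℝ)
    (hK : ∀ i, ContDiffOn ℝ (⊤ : ℕ∞) (K i) U)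
    (hdist : ∀ i j : Fin n, i ≠ j → ∀ x ∈ U, K i x ≠ K j x) :
    (∀ i : Fin n, ∀ x ∈ U,
        (∑ m ∈ Finset.Icc 1 n, ∑ s : Fin n,
          pd (sigmaCoeff (fun y => Matrix.diagonal (fun r => K r y)) m) s x *
            ((Matrix.diagonal (fun r => K r x)) ^ (n - m)) s i) = 0)
      ↔ (∀ i : Fin n, ∀ x ∈ U, pd (K i) i x = 0) := by
  have hd : ∀ x ∈ U, ∀ j, DifferentiableAt ℝ (K j) x := fun x hx j =>
    ((hK j).contDiffAt (hU.mem_nhds hx)).differentiableAt (by simp)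
  refine forall_congr' fun i => forall_congr' fun x => forall_congr' fun hx => ?_
  rw [key_identity K x (hd x hx) i, mul_eq_zero, or_iff_left]
  rw [Finset.prod_eq_zero_iff]
  rintro ⟨j, hj, h0⟩
  exact hdist i j (Finset.ne_of_mem_erase hj).symm x hx (sub_eq_zero.mp h0)
end
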